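/- For every nonnegative integer m (with m ≥ 1 where an index m−1 occurs), the following identities of polynomials with rational coefficients hold: 𝒬_{2m}(x) = P_m(x)·𝒫_m(x); 𝒬_{2m+1}(x) = Q_{m+1}(x)·𝒬_m(x); and Q_m(x)² = Q_{2m}(x) + 2. -/

import Mathlib

open Polynomial Finset

/-- `P_m(x) = Σ_{k=0}^{m} ((2m+1)/(2k+1))·binom(m+k,2k)·x^k`. -/
noncomputable def Ppoly (m : ℕ) : Polynomial ℚ :=
  ∑ k ∈ Finset.range (m + 1),
    Polynomial.C ((2 * m + 1 : ℚ) / (2 * k + 1) * (Nat.choose (m + k) (2 * k))) * Polynomial.X ^ k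

/-- `Q_m(x) = 2 + Σ_{k=1}^{m} (m/k)·binom(m+k−1,2k−1)·x^k`. -/
noncomputable def Qpoly (m : ℕ) : Polynomial ℚ :=
  Polynomial.C 2 + ∑ k ∈ Finset.Icc 1 m,
    Polynomial.C ((m : ℚ) / k * (Nat.choose (m + k - 1) (2 * k - 1))) * Polynomial.X ^ k

/-- `𝒫_m(x) = Σ_{k=0}^{m} binom(m+k,2k)·x^k`. -/
noncomputable def calP (m : ℕ) : Polynomial ℚ :=
  ∑ k ∈ Finset.range (m + 1),
    Polynomial.C ((Nat.choose (m + k) (2 * k) : ℚ)) * Polynomial.X ^ k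

/-- `𝒬_m(x) = Σ_{k=0}^{m} binom(m+k+1,2k+1)·x^k`. -/
noncomputable def calQ (m : ℕ) : Polynomial ℚ :=
  ∑ k ∈ Finset.range (m + 1),
    Polynomial.C ((Nat.choose (m + k + 1) (2 * k + 1) : ℚ)) * Polynomial.X ^ k

lemma calP_coeff (m k : ℕ) : (calP m).coeff k = (Nat.choose (m + k) (2 * k) : ℚ) := by
  simp only [calP, finsetSum_coeff, coeff_C_mul, coeff_X_pow, mul_ite, mul_one, mul_zero,
    Finset.sum_ite_eq, Finset.mem_range]
  split_ifs with h
  · rfl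
  · rw [Nat.choose_eq_zero_of_lt (by omega)]; simp

lemma calQ_coeff (m k : ℕ) : (calQ m).coeff k = (Nat.choose (m + k + 1) (2 * k + 1) : ℚ) := by
  simp only [calQ, finsetSum_coeff, coeff_C_mul, coeff_X_pow, mul_ite, mul_one, mul_zero,
    Finset.sum_ite_eq, Finset.mem_range]
  split_ifs with h
  · rfl
  · rw [Nat.choose_eq_zero_of_lt (by omega)]; simp

lemma Ppoly_coeff (m k : ℕ) : (Ppoly m).coeff k =
    (2 * m + 1 : ℚ) / (2 * k + 1) * (Nat.choose (m + k) (2 * k)) := by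
  simp only [Ppoly, finsetSum_coeff, coeff_C_mul, coeff_X_pow, mul_ite, mul_one, mul_zero,
    Finset.sum_ite_eq, Finset.mem_range]
  split_ifs with h
  · rfl
  · rw [Nat.choose_eq_zero_of_lt (by omega)]; simp

lemma Qpoly_coeff_zero (m : ℕ) : (Qpoly m).coeff 0 = 2 := by
  simp only [Qpoly, coeff_add, finsetSum_coeff, coeff_C_mul, coeff_X_pow, mul_ite, mul_one,
    mul_zero, Finset.sum_ite_eq, Finset.mem_Icc]
  simp

lemma Qpoly_coeff_succ (m k : ℕ) : (Qpoly m).coeff (k + 1) =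
    (m : ℚ) / (k + 1) * (Nat.choose (m + k) (2 * k + 1)) := by
  simp only [Qpoly, coeff_add, finsetSum_coeff, coeff_C_mul, coeff_X_pow, mul_ite, mul_one,
    mul_zero, Finset.sum_ite_eq, Finset.mem_Icc, coeff_C_succ, zero_add]
  split_ifs with h
  · rw [show m + (k + 1) - 1 = m + k by omega, show 2 * (k + 1) - 1 = 2 * k + 1 by omega]
    push_cast; rfl
  · rw [Nat.choose_eq_zero_of_lt (by omega)]; simp

lemma calP_succ (m : ℕ) : calP (m + 1) = calP m + X * calQ m := by
  ext k
  rcases k with _ | k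
  · simp [calP_coeff]
  · rw [coeff_add, coeff_X_mul, calP_coeff, calP_coeff, calQ_coeff,
      show m + 1 + (k + 1) = (m + k + 1) + 1 by ring, show 2 * (k + 1) = (2 * k + 1) + 1 by ring,
      Nat.choose_succ_succ, ← add_assoc m k 1]
    push_cast; ring

lemma calQ_succ (m : ℕ) : calQ (m + 1) = calQ m + calP (m + 1) := by
  ext k
  rw [coeff_add, calP_coeff, calQ_coeff, calQ_coeff, Nat.choose_succ_succ,
    show m + 1 + k = m + k + 1 by ring]
  push_cast; ring

lemma Ppoly_eq (m : ℕ) : Ppoly m = 2 * calQ m - calP m := by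
  ext k
  have h := Nat.add_one_mul_choose_eq (m + k) (2 * k)
  have h' : ((m : ℚ) + k + 1) * (Nat.choose (m + k) (2 * k)) =
      (Nat.choose (m + k + 1) (2 * k + 1)) * (2 * k + 1) := by exact_mod_cast h
  have e : (2 : ℚ[X]) = C 2 := rfl
  rw [coeff_sub, e, coeff_C_mul, Ppoly_coeff, calP_coeff, calQ_coeff]
  have : (2 * (k : ℚ) + 1) ≠ 0 := by positivity
  field_simp
  linear_combination 2 * h'

lemma Qpoly_succ_eq (m : ℕ) : Qpoly (m + 1) = 2 * calP m + X * calQ m := by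
  have e : (2 : ℚ[X]) = C 2 := rfl
  ext k
  rcases k with _ | k
  · rw [e, coeff_add, coeff_C_mul]
    simp [Qpoly_coeff_zero, calP_coeff]
  · rw [e, coeff_add, coeff_C_mul, coeff_X_mul, calP_coeff, calQ_coeff, Qpoly_coeff_succ,
      show m + 1 + k = m + k + 1 by ring, show 2 * (k + 1) = 2 * k + 1 + 1 by ring,
      ← add_assoc m k 1]
    have h' : ((Nat.choose (m + k + 1) (2 * k + 1 + 1) : ℕ) : ℚ) * (2 * k + 2) =
        (Nat.choose (m + k + 1) (2 * k + 1)) * (m - k) := by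
      rcases le_or_gt k m with hk | hk
      · have h := Nat.choose_succ_right_eq (m + k + 1) (2 * k + 1)
        rw [show m + k + 1 - (2 * k + 1) = m - k by omega] at h
        have h2 := congrArg (Nat.cast : ℕ → ℚ) h
        push_cast [Nat.cast_sub hk] at h2
        linear_combination h2
      · rw [Nat.choose_eq_zero_of_lt (by omega), Nat.choose_eq_zero_of_lt (by omega)]; simp
    have : ((k : ℚ) + 1) ≠ 0 := by positivity
    push_cast
    field_simp
    linear_combination -h'

lemma calP_zero : calP 0 = 1 := by simp [calP]

lemma calQ_zero : calQ 0 = 1 := by simp [calQ]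

lemma cal_invariant (m : ℕ) :
    calP m ^ 2 + X * calP m * calQ m - X * calQ m ^ 2 = 1 := by
  induction m with
  | zero => rw [calP_zero, calQ_zero]; ring
  | succ m ih => rw [calQ_succ, calP_succ]; linear_combination ih

lemma cal_double (m : ℕ) :
    calQ (2 * m) = (2 * calQ m - calP m) * calP m ∧
    calP (2 * m) = calP m ^ 2 + X * calQ m ^ 2 - X * (2 * calQ m - calP m) * calP m := by
  induction m with
  | zero => rw [mul_zero, calP_zero, calQ_zero]; constructor <;> ring
  | succ m ih =>
    obtain ⟨h1, h2⟩ := ih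
    rw [show 2 * (m + 1) = 2 * m + 1 + 1 by ring]
    simp only [calQ_succ, calP_succ, h1, h2]
    constructor <;> ring

theorem stmt_4 (m : ℕ) :
    calQ (2 * m) = Ppoly m * calP m ∧
    calQ (2 * m + 1) = Qpoly (m + 1) * calQ m ∧
    (Qpoly m) ^ 2 = Qpoly (2 * m) + 2 := by
  obtain ⟨h1, h2⟩ := cal_double m
  refine ⟨?_, ?_, ?_⟩
  · rw [h1, Ppoly_eq]
  · rw [Qpoly_succ_eq, calQ_succ, calP_succ, h1, h2]; ring
  · rcases m with _ | m
    · have : Qpoly 0 = 2 := by simp [Qpoly]; rfl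
      rw [mul_zero, this]; norm_num
    · obtain ⟨h1, h2⟩ := cal_double m
      rw [show 2 * (m + 1) = 2 * m + 1 + 1 by ring, Qpoly_succ_eq, Qpoly_succ_eq, calQ_succ,
        calP_succ, h1, h2]
      linear_combination 2 * cal_invariant m
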